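/- arXiv:1909.02929 — 2 statements merged into one kernel-verified Lean document; each statement's English description precedes it below -/
import Mathlib

section
/- For every λ > 0, r > 0, α > 1 and y ∈ ℕ, with γ = (α−1)/r, the BNB score s(y, λ) = γλ·(ψ(γλ+y) + ψ(γλ+α) − ψ(γλ+y+α+r) − ψ(γλ)) satisfies −(r+α+1) ≤ s(y, λ) ≤ α+1; in particular |s(y, λ)| ≤ α+r+1. -/
noncomputable def digamma (x : ℝ) : ℝ := deriv (fun t => Real.log (Real.Gamma t)) x

noncomputable def bnbScore (r a lam y : ℝ) : ℝ :=
  ((a - 1) / r) * lam *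
    (digamma (((a - 1) / r) * lam + y) + digamma (((a - 1) / r) * lam + a) -
      digamma (((a - 1) / r) * lam + y + a + r) - digamma (((a - 1) / r) * lam))

/-! The function `log ∘ Γ` is convex, and its increment over `[x, x + 1]` is `log x`, so comparing
this secant slope with the endpoint derivatives gives `ψ x ≤ log x ≤ ψ (x + 1) = ψ x + 1 / x`.
Hence `ψ (x + c) - ψ x ≤ log (1 + c / x) + 1 / x ≤ (c + 1) / x`. The score is a difference of two
terms of this kind, both nonnegative because `ψ` is increasing, so each is bounded separately. -/

open Set

section Digamma

variable {x c : ℝ}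

lemma differentiableAt_log_Gamma (hx : 0 < x) :
    DifferentiableAt ℝ (fun t => Real.log (Real.Gamma t)) x :=
  (Real.differentiableAt_Gamma fun m =>
    ((neg_nonpos.2 m.cast_nonneg).trans_lt hx).ne').log (Real.Gamma_pos_of_pos hx).ne'

lemma log_Gamma_add_one (hx : 0 < x) :
    Real.log (Real.Gamma (x + 1)) = Real.log (Real.Gamma x) + Real.log x := by
  rw [Real.Gamma_add_one hx.ne', Real.log_mul hx.ne' (Real.Gamma_pos_of_pos hx).ne', add_comm]

lemma slope_log_Gamma_add_one (hx : 0 < x) :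
    slope (fun t => Real.log (Real.Gamma t)) x (x + 1) = Real.log x := by
  simp [slope_def_field, log_Gamma_add_one hx]

lemma monotoneOn_digamma : MonotoneOn digamma (Ioi 0) :=
  Real.convexOn_log_Gamma.monotoneOn_deriv fun _ hx => differentiableAt_log_Gamma hx

lemma digamma_le_digamma_add (hx : 0 < x) (hc : 0 ≤ c) : digamma x ≤ digamma (x + c) :=
  monotoneOn_digamma hx (add_pos_of_pos_of_nonneg hx hc) (le_add_of_nonneg_right hc)

lemma digamma_add_one (hx : 0 < x) : digamma (x + 1) = digamma x + x⁻¹ := by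
  have log_Gamma_shift : (fun t => Real.log (Real.Gamma (t + 1))) =ᶠ[nhds x]
      fun t => Real.log (Real.Gamma t) + Real.log t := by
    filter_upwards [Ioi_mem_nhds hx] with t ht using log_Gamma_add_one ht
  unfold digamma
  rw [← deriv_comp_add_const, log_Gamma_shift.deriv_eq,
    deriv_fun_add (differentiableAt_log_Gamma hx) (Real.differentiableAt_log hx.ne'),
    Real.deriv_log]

lemma digamma_le_log (hx : 0 < x) : digamma x ≤ Real.log x :=
  (Real.convexOn_log_Gamma.deriv_le_slope hx (mem_Ioi.2 (by positivity)) (lt_add_one x)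
    (differentiableAt_log_Gamma hx)).trans_eq (slope_log_Gamma_add_one hx)

lemma log_le_digamma_add_one (hx : 0 < x) : Real.log x ≤ digamma (x + 1) :=
  (slope_log_Gamma_add_one hx).symm.trans_le <|
    Real.convexOn_log_Gamma.slope_le_deriv hx (mem_Ioi.2 (by positivity)) (lt_add_one x)
      (differentiableAt_log_Gamma (by positivity))

lemma digamma_add_sub_digamma_le (hx : 0 < x) (hc : 0 ≤ c) :
    digamma (x + c) - digamma x ≤ (c + 1) / x := by
  have digamma_ge : Real.log x - x⁻¹ ≤ digamma x := by
    rw [sub_le_iff_le_add, ← digamma_add_one hx]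
    exact log_le_digamma_add_one hx
  calc digamma (x + c) - digamma x
      ≤ Real.log (x + c) - (Real.log x - x⁻¹) :=
        sub_le_sub (digamma_le_log (by positivity)) digamma_ge
    _ = Real.log ((x + c) / x) + x⁻¹ := by
        rw [Real.log_div (by positivity) hx.ne']
        ring
    _ ≤ ((x + c) / x - 1) + x⁻¹ := by
        gcongr
        exact Real.log_le_sub_one_of_pos (by positivity)
    _ = (c + 1) / x := by
        field_simp
        ring

lemma mul_digamma_add_sub_digamma_mem_Icc {w : ℝ} (hw : 0 ≤ w) (hwx : w ≤ x) (hx : 0 < x)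
    (hc : 0 ≤ c) : w * (digamma (x + c) - digamma x) ∈ Icc 0 (c + 1) := by
  have increment_nonneg : 0 ≤ digamma (x + c) - digamma x :=
    sub_nonneg.2 (digamma_le_digamma_add hx hc)
  refine ⟨mul_nonneg hw increment_nonneg, ?_⟩
  calc w * (digamma (x + c) - digamma x)
      ≤ x * ((c + 1) / x) :=
        mul_le_mul hwx (digamma_add_sub_digamma_le hx hc) increment_nonneg hx.le
    _ = c + 1 := mul_div_cancel₀ (c + 1) hx.ne'

end Digamma

theorem bnb_score_bounds_general (lam r a y : ℝ) (hlam : 0 < lam) (hr : 0 < r) (ha : 1 < a)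
    (hy : 0 ≤ y) :
    (-(r + a + 1) ≤ bnbScore r a lam y ∧ bnbScore r a lam y ≤ a + 1) ∧
      |bnbScore r a lam y| ≤ a + r + 1 := by
  have hx : 0 < (a - 1) / r * lam := mul_pos (div_pos (sub_pos.2 ha) hr) hlam
  unfold bnbScore
  generalize (a - 1) / r * lam = x at hx ⊢
  obtain ⟨gain_nonneg, gain_le⟩ :=
    mul_digamma_add_sub_digamma_mem_Icc (c := a) hx.le le_rfl hx (by positivity)
  obtain ⟨loss_nonneg, loss_le⟩ :=
    mul_digamma_add_sub_digamma_mem_Icc (x := x + y) (c := a + r) hx.le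
      (le_add_of_nonneg_right hy) (by positivity) (by positivity)
  rw [← add_assoc] at loss_nonneg loss_le
  refine ⟨⟨?_, ?_⟩, abs_le.2 ⟨?_, ?_⟩⟩ <;> linarith

theorem bnb_score_bounds (lam r a : ℝ) (hlam : 0 < lam) (hr : 0 < r) (ha : 1 < a) (y : ℕ) :
    (-(r + a + 1) ≤ bnbScore r a lam (y : ℝ) ∧ bnbScore r a lam (y : ℝ) ≤ a + 1) ∧
      |bnbScore r a lam (y : ℝ)| ≤ a + r + 1 :=
  bnb_score_bounds_general lam r a y hlam hr ha y.cast_nonneg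
end

section
/- Let r > 0, α > 1 and λ₁ ≥ λ₂ > 0. Then the beta negative binomial pmfs are ordered in the likelihood ratio order: for all y₁, y₂ ∈ ℕ with y₁ ≥ y₂, p(y₁; λ₁, r, α)·p(y₂; λ₂, r, α) ≥ p(y₂; λ₁, r, α)·p(y₁; λ₂, r, α). -/
noncomputable def betaFn (a b : ℝ) : ℝ := Real.Gamma a * Real.Gamma b / Real.Gamma (a + b)

noncomputable def bnbPmf (lam r a : ℝ) (y : ℕ) : ℝ :=
  Real.Gamma ((y : ℝ) + r) / (Real.Gamma ((y : ℝ) + 1) * Real.Gamma r) *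
    (betaFn (a + r) ((a - 1) * lam / r + (y : ℝ)) / betaFn a ((a - 1) * lam / r))

/-!
With `b = (a - 1) * lam / r`, the mean parameter enters the pmf only through
`betaFn (a + r) (b + y) / betaFn a b`, so in a likelihood ratio everything cancels except a factor
constant in `y` and a ratio of the beta functions `betaFn (a + r) (b + y)`. That ratio is monotone
in `y` because `betaFn c (x + 1) / betaFn c x = x / (c + x)` is increasing in `x`.
-/

theorem mul_le_mul_of_forall_mul_succ_le {K : Type*} [Field K] [LinearOrder K]
    [IsStrictOrderedRing K] {f g : ℕ → K} (hg : ∀ n, 0 < g n)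
    (hfg : ∀ n, f n * g (n + 1) ≤ f (n + 1) * g n) {m n : ℕ} (hmn : m ≤ n) :
    f m * g n ≤ f n * g m := by
  have hmono : Monotone fun n ↦ f n / g n :=
    monotone_nat_of_le_succ fun n ↦ (div_le_div_iff₀ (hg n) (hg (n + 1))).2 (hfg n)
  exact (div_le_div_iff₀ (hg m) (hg n)).1 (hmono hmn)

theorem monotoneOn_div_const_add {K : Type*} [Field K] [LinearOrder K] [IsStrictOrderedRing K]
    {c : K} (hc : 0 ≤ c) : MonotoneOn (fun x ↦ x / (c + x)) (Set.Ioi (-c)) := by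
  intro x hx y hy hxy
  have hcx : 0 < c + x := neg_lt_iff_pos_add'.1 hx
  have hcy : 0 < c + y := neg_lt_iff_pos_add'.1 hy
  refine (div_le_div_iff₀ hcx hcy).2 ?_
  linarith [mul_le_mul_of_nonneg_left hxy hc]

theorem betaFn_pos {a b : ℝ} (ha : 0 < a) (hb : 0 < b) : 0 < betaFn a b :=
  ProbabilityTheory.beta_pos ha hb

theorem betaFn_add_one_right {a b : ℝ} (hb : b ≠ 0) (hab : a + b ≠ 0) :
    betaFn a (b + 1) = b / (a + b) * betaFn a b := by
  simp only [betaFn]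
  rw [← add_assoc, Real.Gamma_add_one hb, Real.Gamma_add_one hab, mul_left_comm, mul_div_mul_comm]

theorem betaFn_mul_betaFn_add_one_le {c x y : ℝ} (hc : 0 < c) (hx : 0 < x) (hxy : x ≤ y) :
    betaFn c y * betaFn c (x + 1) ≤ betaFn c (y + 1) * betaFn c x := by
  have hy : 0 < y := hx.trans_le hxy
  have hratio : x / (c + x) ≤ y / (c + y) :=
    monotoneOn_div_const_add hc.le ((neg_neg_of_pos hc).trans hx) ((neg_neg_of_pos hc).trans hy) hxy
  have hprod : 0 ≤ betaFn c x * betaFn c y := (mul_pos (betaFn_pos hc hx) (betaFn_pos hc hy)).le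
  rw [betaFn_add_one_right hx.ne' (add_pos hc hx).ne',
    betaFn_add_one_right hy.ne' (add_pos hc hy).ne']
  linarith [mul_le_mul_of_nonneg_right hratio hprod]

theorem betaFn_mul_betaFn_add_natCast_le {c x y : ℝ} (hc : 0 < c) (hx : 0 < x) (hxy : x ≤ y)
    {m n : ℕ} (hmn : m ≤ n) :
    betaFn c (y + m) * betaFn c (x + n) ≤ betaFn c (y + n) * betaFn c (x + m) := by
  refine mul_le_mul_of_forall_mul_succ_le (f := fun k : ℕ ↦ betaFn c (y + k))
    (g := fun k : ℕ ↦ betaFn c (x + k)) (fun k ↦ betaFn_pos hc (by positivity)) (fun k ↦ ?_) hmn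
  simp only [Nat.cast_succ, ← add_assoc]
  exact betaFn_mul_betaFn_add_one_le hc (by positivity) (by gcongr)

theorem bnbPmf_mul_bnbPmf (lam lam' r a : ℝ) (m n : ℕ) :
    bnbPmf lam r a m * bnbPmf lam' r a n =
      Real.Gamma (m + r) * Real.Gamma (n + r) /
          (Real.Gamma (m + 1) * Real.Gamma (n + 1) * Real.Gamma r ^ 2) *
        (betaFn (a + r) ((a - 1) * lam / r + m) * betaFn (a + r) ((a - 1) * lam' / r + n) /
          (betaFn a ((a - 1) * lam / r) * betaFn a ((a - 1) * lam' / r))) := by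
  simp only [bnbPmf]
  ring

theorem bnb_likelihood_ratio_order (r a lam1 lam2 : ℝ) (hr : 0 < r) (ha : 1 < a)
    (h2 : 0 < lam2) (h12 : lam2 ≤ lam1) (y1 y2 : ℕ) (hy : y2 ≤ y1) :
    bnbPmf lam1 r a y2 * bnbPmf lam2 r a y1 ≤ bnbPmf lam1 r a y1 * bnbPmf lam2 r a y2 := by
  have ha_pos : 0 < a := one_pos.trans ha
  have ha_sub : 0 < a - 1 := sub_pos.2 ha
  have hb2 : 0 < (a - 1) * lam2 / r := div_pos (mul_pos ha_sub h2) hr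
  have hb : (a - 1) * lam2 / r ≤ (a - 1) * lam1 / r := by gcongr
  have hbeta := betaFn_mul_betaFn_add_natCast_le (add_pos ha_pos hr) hb2 hb hy
  have hden1 := betaFn_pos ha_pos (hb2.trans_le hb)
  have hden2 := betaFn_pos ha_pos hb2
  rw [bnbPmf_mul_bnbPmf, bnbPmf_mul_bnbPmf, mul_comm (Real.Gamma (y2 + r)),
    mul_comm (Real.Gamma (y2 + 1))]
  gcongr
end
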